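/- Let ξ ∈ ℝ satisfy |a| < |ξ| < 1 and suppose a sequence of integers {y_n} satisfies y_n = nξ + O(1) as n → ∞. Then lim (1/n) log p_n(φ; y_n) = −H_Q(ξ), where the limit is taken over positive integers n such that n + y_n is even. -/

import Mathlib

open Filter Topology Asymptotics MeasureTheory

noncomputable section

/-- One step of the (column-decomposition) quantum walk `U` on functions `ℤ → ℂ²`:
`(Uf)(x) = P f(x+1) + Q f(x-1)` with `P = [[a,0],[-conj b,0]]`, `Q = [[0,b],[0,conj a]]`. -/
def qwStep (a b : ℂ) (f : ℤ → ℂ × ℂ) : ℤ → ℂ × ℂ := fun x =>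
  (a * (f (x + 1)).1 + b * (f (x - 1)).2,
   -(starRingEnd ℂ) b * (f (x + 1)).1 + (starRingEnd ℂ) a * (f (x - 1)).2)

/-- `δ₀ ⊗ φ : ℤ → ℂ²`. -/
def qwDelta (φ : ℂ × ℂ) : ℤ → ℂ × ℂ := fun x => if x = 0 then φ else 0

/-- Squared norm of a vector in `ℂ²`. -/
def nsq (u : ℂ × ℂ) : ℝ := ‖u.1‖ ^ 2 + ‖u.2‖ ^ 2

/-- Transition probability `p_n(φ; y) = ‖(Uⁿ(δ₀ ⊗ φ))(y)‖²`. -/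
def qwP (a b : ℂ) (φ : ℂ × ℂ) (n : ℕ) (y : ℤ) : ℝ :=
  nsq (((qwStep a b)^[n] (qwDelta φ)) y)

/-- `λ_A(φ) = |φ₂|² − |φ₁|² + (1/|a|²)(ab conj(φ₁)φ₂ + conj(ab) φ₁ conj(φ₂))` (a real number). -/
def lamA (a b : ℂ) (φ : ℂ × ℂ) : ℝ :=
  ‖φ.2‖ ^ 2 - ‖φ.1‖ ^ 2 +
    (a * b * (starRingEnd ℂ) φ.1 * φ.2 +
      (starRingEnd ℂ) a * (starRingEnd ℂ) b * φ.1 * (starRingEnd ℂ) φ.2).re / ‖a‖ ^ 2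

/-- `μ(t) = arccos(|a| cos t)`. -/
def muF (a : ℂ) (t : ℝ) : ℝ := Real.arccos (‖a‖ * Real.cos t)

/-- `t(η) = arcsin(|b|η/(|a|√(1 − η²)))`. -/
def tF (a b : ℂ) (η : ℝ) : ℝ := Real.arcsin (‖b‖ * η / (‖a‖ * Real.sqrt (1 - η ^ 2)))

/-- `θ(η) = 2μ(t(η)) − 2η t(η)`. -/
def thetaF (a b : ℂ) (η : ℝ) : ℝ := 2 * muF a (tF a b η) - 2 * η * tF a b η

/-- The rate function `H_Q(ξ)` on `|a| < |ξ| < 1`. -/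
def HQ (a b : ℂ) (ξ : ℝ) : ℝ :=
  2 * |ξ| * Real.log (‖b‖ * |ξ| + Real.sqrt (ξ ^ 2 - ‖a‖ ^ 2)) -
    2 * Real.log (‖b‖ + Real.sqrt (ξ ^ 2 - ‖a‖ ^ 2)) +
    (1 - |ξ|) * Real.log (1 - ξ ^ 2) - 2 * |ξ| * Real.log ‖a‖

/-!
Solving the recursion of the walk shows that, up to phases, the amplitude after `l` steps to the
left and `r` to the right is `|a| ^ (l + r)` times a 2×2 transfer matrix of Meixner polynomials at
`s = |a|⁻²`. Outside the support `|ξ| ≤ |a|` of the limit law these polynomials do not oscillate: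
their size is governed by a real saddle point of the generating function, of radius `v`, and
evaluating the logarithm of that function there gives `H_Q`.

The upper bound is Parseval's identity for the generating function on the circle of radius `v`. For
the lower bound, the ratios of Meixner polynomials of consecutive degrees are controlled by `v`
through the three-term recurrence. Since the entries of the transfer matrix could cancel against a
particular `φ`, one bounds its determinant instead: it is a Casoratian, which the
Christoffel–Darboux recursion bounds below by a product of two Meixner polynomials. By Cramer's rule
all `φ` then have transition probabilities `exp (-n H_Q(y / n))` up to a power of `n`.
-/

section Meixner

variable {𝕜 : Type*} [CommRing 𝕜] (s : 𝕜)

/-- The Meixner polynomial `M_N(R; 1, c) = ₂F₁(-N, -R; 1; 1 - s)` with `s = 1 / c`. The Pascal rule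
serves as definition: it is what the walk produces, and it makes sense in any commutative ring. -/
def meixner : ℕ → ℕ → 𝕜
  | 0, _ => 1
  | _ + 1, 0 => 1
  | N + 1, R + 1 => meixner N (R + 1) + meixner (N + 1) R - s * meixner N R

@[simp]
lemma meixner_zero_left (R : ℕ) : meixner s 0 R = 1 := by rw [meixner]

@[simp]
lemma meixner_zero_right (N : ℕ) : meixner s N 0 = 1 := by cases N <;> rw [meixner]

lemma meixner_succ_succ (N R : ℕ) :
    meixner s (N + 1) (R + 1)
      = meixner s N (R + 1) + meixner s (N + 1) R - s * meixner s N R := by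
  rw [meixner]

lemma meixner_one_left (R : ℕ) : meixner s 1 R = 1 + R - s * R := by
  induction R with
  | zero => simp
  | succ R ih =>
    rw [meixner_succ_succ, ih, meixner_zero_left, meixner_zero_left]
    push_cast
    ring

lemma meixner_one_right (N : ℕ) : meixner s N 1 = 1 + N - s * N := by
  induction N with
  | zero => simp
  | succ N ih =>
    rw [meixner_succ_succ, ih, meixner_zero_right, meixner_zero_right]
    push_cast
    ring

-- The difference of the two sides satisfies the Pascal rule and vanishes on both axes.
lemma succ_mul_meixner_succ_right (N R : ℕ) :
    ((R : 𝕜) + 1) * meixner s N (R + 1)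
      = ((N : 𝕜) + 1) * meixner s (N + 1) R + s * (R - N) * meixner s N R := by
  induction N generalizing R with
  | zero =>
    simp only [meixner_zero_left, zero_add, meixner_one_left]
    push_cast
    ring
  | succ N ihN =>
    induction R with
    | zero =>
      simp only [meixner_zero_right, zero_add, meixner_one_right]
      push_cast
      ring
    | succ R ihR =>
      have h₁ := meixner_succ_succ s N (R + 1)
      have h₂ := meixner_succ_succ s (N + 1) R
      have h₃ := meixner_succ_succ s N R
      have ih := ihN (R + 1)
      push_cast at ih ihR ⊢
      linear_combination ihR + ih - s * ihN R + ((R : 𝕜) + 2) * h₁ - ((N : 𝕜) + 2) * h₂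
        - s * (R - N) * h₃

lemma succ_mul_meixner_succ_left (N R : ℕ) :
    ((R : 𝕜) + 1) * meixner s (N + 1) R
      = ((R : 𝕜) - N) * meixner s (N + 1) (R + 1) + ((N : 𝕜) + 1) * meixner s N (R + 1) := by
  linear_combination -succ_mul_meixner_succ_right s N R - ((R : 𝕜) - N) * meixner_succ_succ s N R

lemma meixner_three_term (n x : ℕ) :
    ((n : 𝕜) + 2) * meixner s (n + 2) x
      = (x + n + 2 - s * (x - n - 1)) * meixner s (n + 1) x
        - s * (n + 1) * meixner s n x := by
  rcases x with _ | x
  · simp only [meixner_zero_right]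
    push_cast
    ring
  · have h₁ := succ_mul_meixner_succ_left s n x
    have h₂ := succ_mul_meixner_succ_left s (n + 1) x
    have h₃ := meixner_succ_succ s (n + 1) x
    push_cast at h₂ ⊢
    linear_combination h₂ - s * h₁ + ((x : 𝕜) + 1) * h₃

/-- The Casoratian of the degrees `n` and `n + 1` at the points `x` and `x + 1`: up to the factor
`s` the determinant of the transfer matrix of the walk. -/
def meixnerCasoratian (n x : ℕ) : 𝕜 :=
  meixner s n (x + 1) * meixner s (n + 1) x - meixner s n x * meixner s (n + 1) (x + 1)

-- Christoffel–Darboux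
lemma succ_mul_meixnerCasoratian_succ (n x : ℕ) :
    ((n : 𝕜) + 2) * meixnerCasoratian s (n + 1) x
      = (s - 1) * (meixner s (n + 1) x * meixner s (n + 1) (x + 1))
        + s * ((n + 1) * meixnerCasoratian s n x) := by
  have h₁ := meixner_three_term s n x
  have h₂ := meixner_three_term s n (x + 1)
  push_cast at h₂
  unfold meixnerCasoratian
  linear_combination meixner s (n + 1) (x + 1) * h₁ - meixner s (n + 1) x * h₂

variable {s}

lemma sub_one_mul_meixner_mul_le_meixnerCasoratian [LinearOrder 𝕜] [IsStrictOrderedRing 𝕜]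
    (hs : 1 ≤ s) {n x : ℕ} (h : ∀ k ≤ n, 0 ≤ meixner s k x * meixner s k (x + 1)) :
    (s - 1) * (meixner s n x * meixner s n (x + 1)) ≤ (n + 1) * meixnerCasoratian s n x := by
  induction n with
  | zero =>
    simp only [meixnerCasoratian, meixner_zero_left, zero_add, meixner_one_left]
    push_cast
    linarith
  | succ n ih =>
    have hprev := ih fun k hk => h k (hk.trans n.le_succ)
    have hnonneg : 0 ≤ ((n : 𝕜) + 1) * meixnerCasoratian s n x :=
      (mul_nonneg (sub_nonneg.2 hs) (h n n.le_succ)).trans hprev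
    have hrec := succ_mul_meixnerCasoratian_succ s n x
    push_cast
    linarith [mul_nonneg (zero_le_one.trans hs) hnonneg]

variable (s)

/-- The extension of `meixner` to all integers by zero, for which the closed form of the amplitudes
holds at every site, including those outside the light cone. -/
def meixnerExt : ℤ → ℤ → 𝕜
  | .ofNat N, .ofNat R => meixner s N R
  | _, _ => 0

@[simp]
lemma meixnerExt_natCast (N R : ℕ) : meixnerExt s N R = meixner s N R := rfl

lemma meixnerExt_of_neg_left {N : ℤ} (hN : N < 0) (R : ℤ) : meixnerExt s N R = 0 := by
  obtain ⟨k, rfl⟩ := Int.eq_negSucc_of_lt_zero hN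
  rfl

lemma meixnerExt_of_neg_right (N : ℤ) {R : ℤ} (hR : R < 0) : meixnerExt s N R = 0 := by
  obtain ⟨k, rfl⟩ := Int.eq_negSucc_of_lt_zero hR
  cases N <;> rfl

lemma meixnerExt_rec {N R : ℤ} (h : N + R ≠ 0) :
    meixnerExt s N R
      = meixnerExt s (N - 1) R + meixnerExt s N (R - 1) - s * meixnerExt s (N - 1) (R - 1) := by
  rcases lt_or_ge N 0 with hN | hN
  · simp [meixnerExt_of_neg_left s hN, meixnerExt_of_neg_left s (show N - 1 < 0 by lia)]
  rcases lt_or_ge R 0 with hR | hR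
  · simp [meixnerExt_of_neg_right s _ hR, meixnerExt_of_neg_right s _ (show R - 1 < 0 by lia)]
  lift N to ℕ using hN
  lift R to ℕ using hR
  rcases N with _ | N <;> rcases R with _ | R
  · simp at h
  · have hN : ((0 : ℕ) : ℤ) - 1 < 0 := by lia
    have hR : ((R + 1 : ℕ) : ℤ) - 1 = R := by lia
    simp only [hR, meixnerExt_of_neg_left s hN, meixnerExt_natCast, meixner_zero_left, mul_zero,
      sub_zero, zero_add]
  · have hN : ((N + 1 : ℕ) : ℤ) - 1 = N := by lia
    have hR : ((0 : ℕ) : ℤ) - 1 < 0 := by lia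
    simp only [hN, meixnerExt_of_neg_right s _ hR, meixnerExt_natCast, meixner_zero_right, mul_zero,
      sub_zero, add_zero]
  · have hN : ((N + 1 : ℕ) : ℤ) - 1 = N := by lia
    have hR : ((R + 1 : ℕ) : ℤ) - 1 = R := by lia
    simp only [hN, hR, meixnerExt_natCast, meixner_succ_succ]

end Meixner

section Spinor

lemma nsq_nonneg (u : ℂ × ℂ) : 0 ≤ nsq u := by
  unfold nsq
  positivity

lemma nsq_pos {u : ℂ × ℂ} (hu : u ≠ 0) : 0 < nsq u := by
  have h : u.1 ≠ 0 ∨ u.2 ≠ 0 := by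
    rwa [ne_eq, Prod.ext_iff, not_and_or] at hu
  unfold nsq
  rcases h with h | h <;> positivity

lemma nsq_smul (c : ℂ) (u : ℂ × ℂ) : nsq (c • u) = ‖c‖ ^ 2 * nsq u := by
  simp only [nsq, Prod.smul_fst, Prod.smul_snd, norm_smul]
  ring

lemma nsq_swap (u : ℂ × ℂ) : nsq u.swap = nsq u := by
  simp only [nsq, Prod.fst_swap, Prod.snd_swap, add_comm]

/-- The action of a 2×2 matrix on `ℂ × ℂ`, the model of `ℂ²` in which the walk is defined. -/
def applyMat (M : Matrix (Fin 2) (Fin 2) ℂ) (u : ℂ × ℂ) : ℂ × ℂ :=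
  (M 0 0 * u.1 + M 0 1 * u.2, M 1 0 * u.1 + M 1 1 * u.2)

variable (M : Matrix (Fin 2) (Fin 2) ℂ) (u : ℂ × ℂ)

lemma nsq_applyMat_le : nsq (applyMat M u) ≤ (∑ i, ∑ j, ‖M i j‖ ^ 2) * nsq u := by
  have cauchy (z w : ℂ) :
      ‖z * u.1 + w * u.2‖ ^ 2 ≤ (‖z‖ ^ 2 + ‖w‖ ^ 2) * (‖u.1‖ ^ 2 + ‖u.2‖ ^ 2) := by
    have hnorm : ‖z * u.1 + w * u.2‖ ≤ ‖z‖ * ‖u.1‖ + ‖w‖ * ‖u.2‖ := by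
      simpa only [norm_mul] using norm_add_le (z * u.1) (w * u.2)
    calc ‖z * u.1 + w * u.2‖ ^ 2 ≤ (‖z‖ * ‖u.1‖ + ‖w‖ * ‖u.2‖) ^ 2 := by gcongr
      _ ≤ _ := by linarith [sq_nonneg (‖z‖ * ‖u.2‖ - ‖w‖ * ‖u.1‖)]
  simp only [Fin.sum_univ_two, nsq, applyMat, add_mul] at cauchy ⊢
  linarith [cauchy (M 0 0) (M 0 1), cauchy (M 1 0) (M 1 1)]

lemma applyMat_adjugate_applyMat : applyMat M.adjugate (applyMat M u) = M.det • u := by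
  ext <;> simp [applyMat, Matrix.adjugate_fin_two, Matrix.det_fin_two] <;> ring

lemma norm_det_sq_mul_nsq_le :
    ‖M.det‖ ^ 2 * nsq u ≤ (∑ i, ∑ j, ‖M i j‖ ^ 2) * nsq (applyMat M u) := by
  have h := nsq_applyMat_le M.adjugate (applyMat M u)
  rw [applyMat_adjugate_applyMat, nsq_smul] at h
  refine h.trans_eq ?_
  simp only [Fin.sum_univ_two, Matrix.adjugate_fin_two, Matrix.of_apply, Matrix.cons_val, norm_neg]
  ring

end Spinor

section Amplitude

/-- The transfer matrix at the site `r - l` after `l + r` steps, of which `l` lead to the left and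
`r` to the right: up to the phase `a ^ l * conj a ^ r` it maps the initial spinor to the amplitude
there. In terms of the walk, `s = 1 / ‖a‖²` and `β = b / conj a`. -/
def transferMatrix (s : ℝ) (β : ℂ) (l r : ℤ) : Matrix (Fin 2) (Fin 2) ℂ :=
  !![meixnerExt s l r - meixnerExt s l (r - 1), β * meixnerExt s l (r - 1);
    -starRingEnd ℂ β * meixnerExt s (l - 1) r, meixnerExt s l r - meixnerExt s (l - 1) r]

lemma applyMat_transferMatrix_neg (s : ℝ) (β : ℂ) (φ : ℂ × ℂ) (r : ℤ) :
    applyMat (transferMatrix s β (-r) r) φ = if r = 0 then φ else 0 := by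
  rcases lt_trichotomy r 0 with hr | rfl | hr
  · have hr' : r - 1 < 0 := by lia
    simp [applyMat, transferMatrix, meixnerExt_of_neg_right s _ hr,
      meixnerExt_of_neg_right s _ hr', hr.ne]
  · have h₀ : meixnerExt s 0 0 = 1 := meixner_zero_left s 0
    simp [applyMat, transferMatrix, h₀, meixnerExt_of_neg_left, meixnerExt_of_neg_right]
  · have hr' : -r - 1 < 0 := by lia
    simp [applyMat, transferMatrix, meixnerExt_of_neg_left s (neg_neg_of_pos hr),
      meixnerExt_of_neg_left s hr', hr.ne']

variable {a b : ℂ}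

lemma one_add_norm_div_conj_sq (ha : a ≠ 0) (hab1 : ‖a‖ ^ 2 + ‖b‖ ^ 2 = 1) :
    1 + ‖b / starRingEnd ℂ a‖ ^ 2 = (‖a‖ ^ 2)⁻¹ := by
  have : ‖a‖ ≠ 0 := norm_ne_zero_iff.2 ha
  rw [norm_div, RCLike.norm_conj]
  field_simp
  exact hab1

lemma iterate_qwStep_qwDelta (ha : a ≠ 0) (hab1 : ‖a‖ ^ 2 + ‖b‖ ^ 2 = 1) (φ : ℂ × ℂ) {n : ℕ}
    {l r : ℤ} (hn : l + r = n) :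
    (qwStep a b)^[n] (qwDelta φ) (r - l) = (a ^ l * starRingEnd ℂ a ^ r) •
      applyMat (transferMatrix (‖a‖ ^ 2)⁻¹ (b / starRingEnd ℂ a) l r) φ := by
  have ha' : starRingEnd ℂ a ≠ 0 := (map_ne_zero _).2 ha
  set s := (‖a‖ ^ 2)⁻¹ with hs
  set β := b / starRingEnd ℂ a
  have hββ : (s : ℂ) = 1 + β * starRingEnd ℂ β := by
    rw [Complex.mul_conj', hs, ← one_add_norm_div_conj_sq ha hab1]
    push_cast
    rfl
  have hb : b = β * starRingEnd ℂ a := (div_mul_cancel₀ b ha').symm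
  have hb' : starRingEnd ℂ b = starRingEnd ℂ β * a := by rw [hb, map_mul, Complex.conj_conj]
  induction n generalizing l r with
  | zero =>
    obtain rfl : l = -r := by simpa using eq_neg_of_add_eq_zero_left hn
    rw [applyMat_transferMatrix_neg]
    rcases eq_or_ne r 0 with rfl | hr
    · simp [qwDelta]
    · simp [qwDelta, hr]
  | succ n ih =>
    have hleft : r - l + 1 = r - (l - 1) := by ring
    have hright : r - l - 1 = r - 1 - l := by ring
    have hrec : ((meixnerExt s l r : ℝ) : ℂ) = meixnerExt s (l - 1) r + meixnerExt s l (r - 1)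
        - s * meixnerExt s (l - 1) (r - 1) := by
      exact_mod_cast meixnerExt_rec s (by lia : l + r ≠ 0)
    rw [Function.iterate_succ_apply', qwStep, hleft, hright, ih (by push_cast at hn; lia),
      ih (by push_cast at hn; lia), hb', hb, zpow_sub_one₀ ha, zpow_sub_one₀ ha']
    ext <;> simp only [applyMat, transferMatrix, Matrix.of_apply, Matrix.cons_val, Prod.smul_mk,
      smul_eq_mul, hrec, hββ] <;> field_simp <;> ring

lemma qwP_eq (ha : a ≠ 0) (hab1 : ‖a‖ ^ 2 + ‖b‖ ^ 2 = 1) (φ : ℂ × ℂ) (l r : ℕ) :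
    qwP a b φ (l + r) (r - l) = (‖a‖ ^ 2) ^ (l + r) *
      nsq (applyMat (transferMatrix (‖a‖ ^ 2)⁻¹ (b / starRingEnd ℂ a) l r) φ) := by
  rw [qwP, iterate_qwStep_qwDelta ha hab1 φ (Nat.cast_add l r).symm, nsq_smul]
  simp only [zpow_natCast, norm_mul, norm_pow, RCLike.norm_conj]
  ring

variable {s : ℝ} {β : ℂ}

lemma det_transferMatrix (hβ : 1 + ‖β‖ ^ 2 = s) (N R : ℕ) :
    (transferMatrix s β (N + 1 : ℕ) (R + 1 : ℕ)).det = (s * meixnerCasoratian s N R : ℝ) := by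
  have hl : ((N + 1 : ℕ) : ℤ) - 1 = N := by lia
  have hr : ((R + 1 : ℕ) : ℤ) - 1 = R := by lia
  have hs : (s : ℂ) = 1 + β * starRingEnd ℂ β := by
    rw [Complex.mul_conj', ← hβ]
    push_cast
    rfl
  simp only [transferMatrix, Matrix.det_fin_two_of, hl, hr, meixnerExt_natCast, meixner_succ_succ,
    meixnerCasoratian]
  push_cast
  rw [hs]
  ring

lemma sum_norm_transferMatrix_sq_le (hβ : 1 + ‖β‖ ^ 2 = s) {N R : ℕ} {Z : ℝ}
    (h₁ : meixner s (N + 1) (R + 1) ^ 2 ≤ Z) (h₂ : meixner s (N + 1) R ^ 2 ≤ Z)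
    (h₃ : meixner s N (R + 1) ^ 2 ≤ Z) :
    ∑ i, ∑ j, ‖transferMatrix s β (N + 1 : ℕ) (R + 1 : ℕ) i j‖ ^ 2 ≤ 8 * s * Z := by
  have hl : ((N + 1 : ℕ) : ℤ) - 1 = N := by lia
  have hr : ((R + 1 : ℕ) : ℤ) - 1 = R := by lia
  have norm_sub_ofReal (x y : ℝ) : ‖(x : ℂ) - y‖ ^ 2 = (x - y) ^ 2 := by
    rw [← Complex.ofReal_sub, Complex.norm_real, Real.norm_eq_abs, sq_abs]
  simp only [Fin.sum_univ_two, transferMatrix, Matrix.of_apply, Matrix.cons_val, hl, hr,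
    meixnerExt_natCast, norm_sub_ofReal, norm_mul, norm_neg, RCLike.norm_conj, mul_pow,
    Complex.norm_real, Real.norm_eq_abs, sq_abs]
  set E := meixner s (N + 1) (R + 1)
  set A := meixner s (N + 1) R
  set B := meixner s N (R + 1)
  have hEA : (E - A) ^ 2 ≤ 4 * Z := by linarith [sq_nonneg (E + A)]
  have hEB : (E - B) ^ 2 ≤ 4 * Z := by linarith [sq_nonneg (E + B)]
  have hA := mul_le_mul_of_nonneg_left h₂ (sq_nonneg ‖β‖)
  have hB := mul_le_mul_of_nonneg_left h₃ (sq_nonneg ‖β‖)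
  have hZ := mul_nonneg (sq_nonneg ‖β‖) ((sq_nonneg E).trans h₁)
  rw [← hβ]
  linarith

lemma qwP_reflect (a b : ℂ) (φ : ℂ × ℂ) (n : ℕ) (y : ℤ) :
    qwP (starRingEnd ℂ a) (-starRingEnd ℂ b) φ.swap n (-y) = qwP a b φ n y := by
  have h : (qwStep (starRingEnd ℂ a) (-starRingEnd ℂ b))^[n] (qwDelta φ.swap) (-y)
      = ((qwStep a b)^[n] (qwDelta φ) y).swap := by
    induction n generalizing y with
    | zero => by_cases hy : y = 0 <;> simp [qwDelta, hy]
    | succ n ih =>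
      have hleft : -y + 1 = -(y - 1) := by ring
      have hright : -y - 1 = -(y + 1) := by ring
      rw [Function.iterate_succ_apply', Function.iterate_succ_apply', qwStep, hleft, hright, ih, ih]
      simp only [qwStep, Prod.fst_swap, Prod.snd_swap, Prod.swap_prod_mk, map_neg,
        Complex.conj_conj, neg_neg, add_comm]
  rw [qwP, h, nsq_swap, qwP]

end Amplitude

section UpperBound

lemma meixner_succ_right_eq_sum {𝕜 : Type*} [CommRing 𝕜] (s : 𝕜) (N R : ℕ) :
    meixner s N (R + 1)
      = ∑ k ∈ Finset.range (N + 1), meixner s k R - s * ∑ k ∈ Finset.range N, meixner s k R := by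
  induction N with
  | zero => simp
  | succ N ih =>
    rw [meixner_succ_succ, ih, Finset.sum_range_succ _ (N + 1), Finset.sum_range_succ _ N]
    ring

variable {s v : ℝ}

-- As `q` is the maximum of `|1 - s * z| / |1 - z|` on the circle `|z| = v`, Parseval's identity for
-- the multiplier `(1 - s * z) / (1 - z)` gives this bound. The proof telescopes instead:
-- the difference of the two sides dominates a nonnegative multiple of `(v ^ M * S M) ^ 2`.
lemma sum_sq_sub_mul_le {q : ℝ} (hv : 0 < v) (hq : q * (1 + v) = 1 + s * v) (hq1 : 1 ≤ q)
    (hvq : v * q ≤ 1) {S : ℕ → ℝ} (hS : S 0 = 0) (M : ℕ) :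
    ∑ k ∈ Finset.range M, (v ^ k * (S (k + 1) - s * S k)) ^ 2
      ≤ q ^ 2 * ∑ k ∈ Finset.range M, (v ^ k * (S (k + 1) - S k)) ^ 2 := by
  have step (x y : ℝ) : v ^ 2 * (q ^ 2 * (x - y) ^ 2 - (x - s * y) ^ 2)
      = (q - 1) * (1 - v * q) * (v * x + y) ^ 2
        + q * (1 + v) * (q - 1) * ((v * x) ^ 2 - y ^ 2) := by
    linear_combination (-2 * v * x * y + (s * v + q * (1 + v) - 1) * y ^ 2) * hq
  have key : q * (1 + v) * (q - 1) * (v ^ M * S M) ^ 2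
      ≤ v ^ 2 * (q ^ 2 * ∑ k ∈ Finset.range M, (v ^ k * (S (k + 1) - S k)) ^ 2
        - ∑ k ∈ Finset.range M, (v ^ k * (S (k + 1) - s * S k)) ^ 2) := by
    induction M with
    | zero => simp [hS]
    | succ M ih =>
      have hstep := step (v ^ M * S (M + 1)) (v ^ M * S M)
      have hκ := mul_nonneg (mul_nonneg (sub_nonneg.2 hq1) (sub_nonneg.2 hvq))
        (sq_nonneg (v * (v ^ M * S (M + 1)) + v ^ M * S M))
      rw [Finset.sum_range_succ, Finset.sum_range_succ, pow_succ v]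
      linarith
  have hβ : 0 ≤ q * (1 + v) * (q - 1) * (v ^ M * S M) ^ 2 := by
    have := sub_nonneg.2 hq1
    positivity
  linarith [nonneg_of_mul_nonneg_right (hβ.trans key) (by positivity)]

lemma sum_sq_meixner_le (hv : 0 < v) (hs : 1 < s) (hsv : s * v ^ 2 ≤ 1) (M R : ℕ) :
    ∑ k ∈ Finset.range M, (v ^ k * meixner s k R) ^ 2
      ≤ (((1 + s * v) / (1 + v)) ^ R) ^ 2 / (1 - v ^ 2) := by
  set q := (1 + s * v) / (1 + v) with hq
  induction R with
  | zero =>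
    have hv1 : v ^ 2 < 1 := by nlinarith
    simp only [meixner_zero_right, mul_one, pow_zero, one_pow, pow_right_comm v _ 2]
    rw [one_div, ← tsum_geometric_of_lt_one (sq_nonneg v) hv1]
    exact (summable_geometric_of_lt_one (sq_nonneg v) hv1).sum_le_tsum _
      fun k _ => pow_nonneg (sq_nonneg v) k
  | succ R ih =>
    have hq1 : 1 ≤ q := by
      rw [hq, one_le_div (by positivity)]
      nlinarith
    have hvq : v * q ≤ 1 := by
      rw [hq, mul_div_assoc', div_le_one (by positivity)]
      linarith
    have h := sum_sq_sub_mul_le hv (div_mul_cancel₀ _ (by positivity)) hq1 hvq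
      (S := fun k => ∑ i ∈ Finset.range k, meixner s i R) (Finset.sum_range_zero _) M
    simp only [Finset.sum_range_succ_sub_sum, ← meixner_succ_right_eq_sum] at h
    calc _ ≤ q ^ 2 * ∑ k ∈ Finset.range M, (v ^ k * meixner s k R) ^ 2 := h
      _ ≤ q ^ 2 * ((q ^ R) ^ 2 / (1 - v ^ 2)) := by gcongr
      _ = _ := by ring

/-- The logarithm of `((1 - s * z) / (1 - z)) ^ x / z ^ n` at `z = -v`, up to sign. As
`meixner s n x` is the coefficient of `z ^ n` in `((1 - s * z) / (1 - z)) ^ x / (1 - z)`, the value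
at a saddle point gives its exponential size. -/
def phase (s x n v : ℝ) : ℝ :=
  x * (Real.log (1 + s * v) - Real.log (1 + v)) - n * Real.log v

lemma exp_phase (hv : 0 < v) (hs : 0 ≤ s) (R N : ℕ) :
    Real.exp (phase s R N v) = ((1 + s * v) / (1 + v)) ^ R / v ^ N := by
  rw [phase, ← Real.log_div (by positivity) (by positivity), Real.exp_sub, Real.exp_nat_mul,
    Real.exp_nat_mul, Real.exp_log (by positivity), Real.exp_log hv]

lemma phase_mono (hv : 0 < v) (hv1 : v ≤ 1) (hs : 1 ≤ s) {x x' n n' : ℝ} (hx : x ≤ x')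
    (hn : n ≤ n') : phase s x n v ≤ phase s x' n' v := by
  have h₁ : 0 ≤ Real.log (1 + s * v) - Real.log (1 + v) :=
    sub_nonneg.2 (Real.log_le_log (by positivity) (by nlinarith))
  have h₂ := Real.log_nonpos hv.le hv1
  unfold phase
  nlinarith

lemma meixner_sq_le (hv : 0 < v) (hs : 1 < s) (hsv : s * v ^ 2 ≤ 1) (N R : ℕ) :
    meixner s N R ^ 2 ≤ Real.exp (2 * phase s R N v) / (1 - v ^ 2) := by
  have hterm := (Finset.single_le_sum (fun k _ => sq_nonneg (v ^ k * meixner s k R))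
    (Finset.self_mem_range_succ N)).trans (sum_sq_meixner_le hv hs hsv (N + 1) R)
  rw [two_mul, Real.exp_add, exp_phase hv (zero_le_one.trans hs.le)]
  calc meixner s N R ^ 2 = (v ^ N * meixner s N R) ^ 2 / (v ^ N) ^ 2 := by field_simp
    _ ≤ (((1 + s * v) / (1 + v)) ^ R) ^ 2 / (1 - v ^ 2) / (v ^ N) ^ 2 := by gcongr
    _ = _ := by ring

end UpperBound

section LowerBound

/-- `v` is the smaller of the two critical points of `phase s x n`, whose product is `1 / s`. It
exists when `n / x` lies below the oscillatory range of `meixner s`. -/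
structure IsSaddleRadius (s x n v : ℝ) : Prop where
  pos : 0 < v
  mul_sq_le_one : s * v ^ 2 ≤ 1
  eq : n * ((1 + s * v) * (1 + v)) = (s - 1) * x * v

variable {s x n v : ℝ}

namespace IsSaddleRadius

lemma lt_one (h : IsSaddleRadius s x n v) (hs : 1 < s) : v < 1 := by
  by_contra! hv
  have : 1 ≤ v ^ 2 := one_le_pow₀ hv
  nlinarith [h.mul_sq_le_one]

lemma exists_le_of_le {m w : ℝ} (h : IsSaddleRadius s x m w) (hs : 0 ≤ s) (hn : 0 < n)
    (hnm : n ≤ m) : ∃ v ≤ w, IsSaddleRadius s x n v := by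
  have hcont : ContinuousOn (fun v => (s - 1) * x * v - n * ((1 + s * v) * (1 + v)))
      (Set.Icc 0 w) := by fun_prop
  have hw : 0 ≤ (s - 1) * x * w - n * ((1 + s * w) * (1 + w)) := by
    have := h.pos
    rw [← h.eq, ← sub_mul]
    exact mul_nonneg (sub_nonneg.2 hnm) (by positivity)
  obtain ⟨v, ⟨hv, hvw⟩, hroot⟩ := intermediate_value_Icc h.pos.le hcont
    ⟨by linarith, hw⟩
  rw [sub_eq_zero] at hroot
  refine ⟨v, hvw, hv.lt_of_ne ?_, le_trans ?_ h.mul_sq_le_one, hroot.symm⟩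
  · rintro rfl
    linarith
  · gcongr

end IsSaddleRadius

lemma hasDerivAt_phase (hs : 0 ≤ s) (hv : 0 < v) :
    HasDerivAt (phase s x n) (((s - 1) * x * v - n * ((1 + s * v) * (1 + v)))
      / (v * ((1 + s * v) * (1 + v)))) v := by
  have h₁ : 1 + s * v ≠ 0 := by positivity
  have h₂ : 1 + v ≠ 0 := by positivity
  refine ((((((hasDerivAt_id v).const_mul s).const_add 1).log h₁).sub
    (((hasDerivAt_id v).const_add 1).log h₂)).const_mul x |>.sub
    ((Real.hasDerivAt_log hv.ne').const_mul n)).congr_deriv ?_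
  simp only [id]
  field_simp
  ring

lemma IsSaddleRadius.phase_le {u : ℝ} (h : IsSaddleRadius s x n v) (hs : 1 ≤ s) (hx : 0 ≤ x)
    (hu : 0 < u) (huv : u ≤ v) : phase s x n v ≤ phase s x n u := by
  have hs₀ : 0 ≤ s := zero_le_one.trans hs
  have hderiv {t : ℝ} (ht : 0 < t) := hasDerivAt_phase (x := x) (n := n) hs₀ ht
  refine antitoneOn_of_hasDerivWithinAt_nonpos (convex_Icc u v)
    (fun t ht => (hderiv (hu.trans_le ht.1)).continuousAt.continuousWithinAt)
    (fun t ht => (hderiv (hu.trans_le (interior_subset ht).1)).hasDerivWithinAt) ?_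
    (Set.left_mem_Icc.2 huv) (Set.right_mem_Icc.2 huv) huv
  intro t ht
  obtain ⟨hut, htv⟩ := interior_subset ht
  have ht₀ : 0 < t := hu.trans_le hut
  have hv₀ := h.pos
  refine div_nonpos_of_nonpos_of_nonneg (sub_nonpos.2 ?_) (by positivity)
  have hst : s * (t * v) ≤ 1 := by
    refine le_trans ?_ h.mul_sq_le_one
    rw [sq]
    gcongr
  -- `t / ((1 + s * t) * (1 + t))` increases up to `1 / √s`.
  have hcross : t * ((1 + s * v) * (1 + v)) ≤ v * ((1 + s * t) * (1 + t)) := by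
    nlinarith
  refine le_of_mul_le_mul_right ?_ (show 0 < (1 + s * v) * (1 + v) by positivity)
  calc (s - 1) * x * t * ((1 + s * v) * (1 + v))
      = (s - 1) * x * (t * ((1 + s * v) * (1 + v))) := by ring
    _ ≤ (s - 1) * x * (v * ((1 + s * t) * (1 + t))) :=
      mul_le_mul_of_nonneg_left hcross (mul_nonneg (sub_nonneg.2 hs) hx)
    _ = n * ((1 + s * t) * (1 + t)) * ((1 + s * v) * (1 + v)) := by
      linear_combination -((1 + s * t) * (1 + t)) * h.eq

lemma IsSaddleRadius.exp_phase_one_le (h : IsSaddleRadius s x 1 v) (hs : 1 < s) (hx : 0 < x) :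
    Real.exp (phase s x 1 v) ≤ Real.exp (1 + s) * s * x := by
  have hv := h.pos
  have heq : (1 + s * v) * (1 + v) = (s - 1) * x * v := by rw [← h.eq, one_mul]
  have hlog : x * (Real.log (1 + s * v) - Real.log (1 + v)) ≤ 1 + s := by
    rw [← Real.log_div (by positivity) (by positivity)]
    calc x * Real.log ((1 + s * v) / (1 + v)) ≤ x * ((1 + s * v) / (1 + v) - 1) := by
          gcongr
          exact Real.log_le_sub_one_of_pos (by positivity)
      _ = 1 + s * v := by
          field_simp
          linear_combination -heq
      _ ≤ 1 + s := by nlinarith [h.lt_one hs]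
  have hinv : v⁻¹ ≤ s * x := by
    rw [inv_le_iff_one_le_mul₀ hv]
    nlinarith [mul_pos hx hv, mul_pos (mul_pos (zero_lt_one.trans hs) hv) hv]
  calc Real.exp (phase s x 1 v)
      = Real.exp (x * (Real.log (1 + s * v) - Real.log (1 + v))) * v⁻¹ := by
        rw [phase, one_mul, Real.exp_sub, Real.exp_log hv, div_eq_mul_inv]
    _ ≤ Real.exp (1 + s) * (s * x) := by gcongr
    _ = _ := by ring

/-- The Meixner polynomial with its sign removed: it is positive where a saddle radius exists. -/
def altMeixner (s : ℝ) (n x : ℕ) : ℝ := (-1) ^ n * meixner s n x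

@[simp]
lemma altMeixner_zero_left (s : ℝ) (x : ℕ) : altMeixner s 0 x = 1 := by
  simp [altMeixner]

lemma altMeixner_one_left (s : ℝ) (x : ℕ) : altMeixner s 1 x = (s - 1) * x - 1 := by
  rw [altMeixner, meixner_one_left]
  ring

lemma altMeixner_three_term (s : ℝ) (n x : ℕ) :
    (n + 2) * altMeixner s (n + 2) x
      = (s * (x - n - 1) - x - n - 2) * altMeixner s (n + 1) x
        - s * (n + 1) * altMeixner s n x := by
  unfold altMeixner
  linear_combination (-1) ^ n * meixner_three_term s n x

lemma succ_mul_altMeixner_succ_left (s : ℝ) (n x : ℕ) :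
    (x + 1) * altMeixner s (n + 1) x
      = (x - n) * altMeixner s (n + 1) (x + 1) - (n + 1) * altMeixner s n (x + 1) := by
  unfold altMeixner
  linear_combination (-1) ^ (n + 1) * succ_mul_meixner_succ_left s n x

namespace IsSaddleRadius

lemma altMeixner_pos_and_le_mul {n x : ℕ} (h : IsSaddleRadius s x (n + 1) v) (hs : 0 ≤ s) :
    0 < altMeixner s n x ∧ altMeixner s n x ≤ v * altMeixner s (n + 1) x := by
  induction n generalizing v with
  | zero =>
    have hv := h.pos
    have heq := h.eq
    refine ⟨by simp, ?_⟩
    rw [altMeixner_zero_left, altMeixner_one_left]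
    push_cast at heq
    nlinarith [mul_nonneg hs hv.le, mul_nonneg hs (sq_nonneg v)]
  | succ n ih =>
    have hv := h.pos
    have heq := h.eq
    push_cast at heq
    obtain ⟨u, huv, hu⟩ := h.exists_le_of_le hs (n := n + 1) (by positivity) (by simp)
    obtain ⟨hpos, hle⟩ := ih hu
    have hpos' : 0 < altMeixner s (n + 1) x := pos_of_mul_pos_right (hpos.trans_le hle) hu.pos.le
    have hle' : altMeixner s n x ≤ v * altMeixner s (n + 1) x := hle.trans (by gcongr)
    refine ⟨hpos', le_of_mul_le_mul_left ?_ (by positivity : (0 : ℝ) < n + 2)⟩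
    calc (n + 2) * altMeixner s (n + 1) x
        ≤ (n + 2 + s * v + s * v ^ 2) * altMeixner s (n + 1) x := by
          refine mul_le_mul_of_nonneg_right ?_ hpos'.le
          linarith [mul_nonneg hs hv.le, mul_nonneg hs (sq_nonneg v)]
      _ = v * ((s * (x - n - 1) - x - n - 2) * altMeixner s (n + 1) x
            - s * (n + 1) * (v * altMeixner s (n + 1) x)) := by
          linear_combination altMeixner s (n + 1) x * heq
      _ ≤ v * ((s * (x - n - 1) - x - n - 2) * altMeixner s (n + 1) x
            - s * (n + 1) * altMeixner s n x) := by gcongr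
      _ = (n + 2) * (v * altMeixner s (n + 2) x) := by rw [← altMeixner_three_term]; ring

lemma exp_phase_le {n x : ℕ} (h : IsSaddleRadius s x (n + 1) v) (hs : 1 < s) (hx : 0 < x) :
    Real.exp (phase s x (n + 1) v) ≤ Real.exp (1 + s) * s * x * altMeixner s n x := by
  have hs₀ : 0 ≤ s := zero_le_one.trans hs.le
  induction n generalizing v with
  | zero =>
    rw [Nat.cast_zero, zero_add] at h ⊢
    simpa using h.exp_phase_one_le hs (Nat.cast_pos.2 hx)
  | succ n ih =>
    push_cast at h ⊢
    obtain ⟨u, huv, hu⟩ := h.exists_le_of_le hs₀ (n := n + 1) (by positivity) (by simp)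
    have hsplit : phase s x (n + 1 + 1) u = phase s x (n + 1) u - Real.log u := by
      unfold phase
      ring
    calc Real.exp (phase s x (n + 1 + 1) v)
        ≤ Real.exp (phase s x (n + 1 + 1) u) :=
          Real.exp_le_exp.2 (h.phase_le hs.le (Nat.cast_nonneg x) hu.pos huv)
      _ = Real.exp (phase s x (n + 1) u) / u := by rw [hsplit, Real.exp_sub, Real.exp_log hu.pos]
      _ ≤ Real.exp (1 + s) * s * x * altMeixner s n x / u := by
          have := hu.pos
          gcongr
          exact ih hu
      _ ≤ Real.exp (1 + s) * s * x * altMeixner s (n + 1) x := by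
          rw [mul_div_assoc]
          gcongr
          exact (div_le_iff₀' hu.pos).2 (hu.altMeixner_pos_and_le_mul hs₀).2

lemma altMeixner_succ_right_le {n x : ℕ} (h : IsSaddleRadius s ((x + 1 : ℕ) : ℝ) (n + 1) v)
    (hs : 1 ≤ s) : altMeixner s n (x + 1) ≤ s * altMeixner s n x := by
  have hs₀ : 0 ≤ s := zero_le_one.trans hs
  rcases n with _ | n
  · simpa using hs
  obtain ⟨u, -, hu⟩ := h.exists_le_of_le hs₀ (n := n + 1) (by positivity) (by simp)
  have hpos := (h.altMeixner_pos_and_le_mul hs₀).1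
  have hle := (hu.altMeixner_pos_and_le_mul hs₀).2
  have hu₀ := hu.pos
  have heq := hu.eq
  push_cast at heq
  have hcoef : ((x : ℝ) + 1) ≤ s * (x - n - (n + 1) * u) := by
    refine le_of_mul_le_mul_right ?_ (show 0 < 1 + s * u by positivity)
    nlinarith [mul_nonneg (sub_nonneg.2 hs) (show (0 : ℝ) ≤ x + 1 by positivity)]
  refine le_of_mul_le_mul_left ?_ (show (0 : ℝ) < x + 1 by positivity)
  calc (x + 1) * altMeixner s (n + 1) (x + 1)
      ≤ s * (x - n - (n + 1) * u) * altMeixner s (n + 1) (x + 1) := by gcongr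
    _ = s * ((x - n) * altMeixner s (n + 1) (x + 1)
          - (n + 1) * (u * altMeixner s (n + 1) (x + 1))) := by ring
    _ ≤ s * ((x - n) * altMeixner s (n + 1) (x + 1) - (n + 1) * altMeixner s n (x + 1)) := by
        gcongr
    _ = (x + 1) * (s * altMeixner s (n + 1) x) := by rw [← succ_mul_altMeixner_succ_left]; ring

lemma sub_one_mul_altMeixner_sq_le {n x : ℕ} (h : IsSaddleRadius s ((x + 1 : ℕ) : ℝ) (n + 1) v)
    (hs : 1 ≤ s) :
    (s - 1) * altMeixner s n (x + 1) ^ 2 ≤ s * ((n + 1) * meixnerCasoratian s n x) := by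
  have hs₀ : 0 < s := zero_lt_one.trans_le hs
  have hmul (k : ℕ) :
      altMeixner s k x * altMeixner s k (x + 1) = meixner s k x * meixner s k (x + 1) := by
    simp only [altMeixner]
    rw [mul_mul_mul_comm, ← mul_pow]
    norm_num
  have hle {k : ℕ} (hk : k ≤ n) : 0 < altMeixner s k (x + 1)
      ∧ altMeixner s k (x + 1) ≤ s * altMeixner s k x := by
    obtain ⟨u, -, hu⟩ := h.exists_le_of_le hs₀.le (n := k + 1) (by positivity) (by gcongr)
    exact ⟨(hu.altMeixner_pos_and_le_mul hs₀.le).1, hu.altMeixner_succ_right_le hs⟩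
  have hcas := sub_one_mul_meixner_mul_le_meixnerCasoratian hs (n := n) (x := x) fun k hk => by
    obtain ⟨hpos, hle⟩ := hle hk
    rw [← hmul]
    exact mul_nonneg (pos_of_mul_pos_right (hpos.trans_le hle) hs₀.le).le hpos.le
  obtain ⟨hpos, hle⟩ := hle le_rfl
  rw [← hmul] at hcas
  calc (s - 1) * altMeixner s n (x + 1) ^ 2
      = (s - 1) * (altMeixner s n (x + 1) * altMeixner s n (x + 1)) := by ring
    _ ≤ (s - 1) * (s * altMeixner s n x * altMeixner s n (x + 1)) := by
        have := sub_nonneg.2 hs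
        gcongr
    _ = s * ((s - 1) * (altMeixner s n x * altMeixner s n (x + 1))) := by ring
    _ ≤ _ := by gcongr

lemma exp_two_mul_phase_le {n x : ℕ}
    (h : IsSaddleRadius s ((x + 1 : ℕ) : ℝ) ((n + 1 : ℕ) : ℝ) v) (hs : 1 < s) :
    (s - 1) * Real.exp (2 * phase s ((x + 1 : ℕ) : ℝ) ((n + 1 : ℕ) : ℝ) v)
      ≤ (Real.exp (1 + s) * s * (x + 1 : ℕ)) ^ 2
        * (s * ((n + 1 : ℕ) * meixnerCasoratian s n x)) := by
  have := sub_nonneg.2 hs.le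
  rw [Nat.cast_succ n] at h ⊢
  rw [two_mul, Real.exp_add, ← sq]
  calc (s - 1) * Real.exp (phase s ((x + 1 : ℕ) : ℝ) (n + 1) v) ^ 2
      ≤ (s - 1) * (Real.exp (1 + s) * s * (x + 1 : ℕ) * altMeixner s n (x + 1)) ^ 2 := by
        gcongr
        exact h.exp_phase_le hs x.succ_pos
    _ = (Real.exp (1 + s) * s * (x + 1 : ℕ)) ^ 2 * ((s - 1) * altMeixner s n (x + 1) ^ 2) := by
        ring
    _ ≤ _ := mul_le_mul_of_nonneg_left (h.sub_one_mul_altMeixner_sq_le hs.le) (sq_nonneg _)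

end IsSaddleRadius

end LowerBound

section Velocity

/-- The saddle radius of the walk at velocity `t`, that is, for `s = 1 / ‖a‖²` and
`x / n = (1 + t) / (1 - t)`. -/
def saddleRadius (a b : ℂ) (t : ℝ) : ℝ :=
  (‖b‖ * t - √(t ^ 2 - ‖a‖ ^ 2)) / (‖b‖ + √(t ^ 2 - ‖a‖ ^ 2))

variable {a b : ℂ} {t : ℝ}

lemma norm_pos_of_norm_lt_one (hab1 : ‖a‖ ^ 2 + ‖b‖ ^ 2 = 1) (ha : ‖a‖ < 1) : 0 < ‖b‖ := by
  have : ‖a‖ ^ 2 < 1 := pow_lt_one₀ (norm_nonneg a) ha two_ne_zero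
  exact lt_of_pow_lt_pow_left₀ 2 (norm_nonneg b) (by linarith)

lemma one_add_saddleRadius (hb : 0 < ‖b‖) :
    1 + saddleRadius a b t = ‖b‖ * (1 + t) / (‖b‖ + √(t ^ 2 - ‖a‖ ^ 2)) := by
  have := Real.sqrt_nonneg (t ^ 2 - ‖a‖ ^ 2)
  rw [saddleRadius]
  field_simp
  ring

lemma saddleRadius_eq (hab1 : ‖a‖ ^ 2 + ‖b‖ ^ 2 = 1) (h₁ : ‖a‖ < t) (h₂ : t < 1) :
    saddleRadius a b t = ‖a‖ ^ 2 * (1 - t ^ 2)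
      / ((‖b‖ + √(t ^ 2 - ‖a‖ ^ 2)) * (‖b‖ * t + √(t ^ 2 - ‖a‖ ^ 2))) := by
  have ht : 0 < t := (norm_nonneg a).trans_lt h₁
  have hb := norm_pos_of_norm_lt_one hab1 (h₁.trans h₂)
  have hsq := Real.sq_sqrt (sub_nonneg.2 (pow_le_pow_left₀ (norm_nonneg a) h₁.le 2))
  have := Real.sqrt_nonneg (t ^ 2 - ‖a‖ ^ 2)
  rw [saddleRadius]
  set D := √(t ^ 2 - ‖a‖ ^ 2)
  field_simp
  linear_combination -hsq + t ^ 2 * hab1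

lemma one_add_mul_saddleRadius (ha : a ≠ 0) (hab1 : ‖a‖ ^ 2 + ‖b‖ ^ 2 = 1) (h₁ : ‖a‖ < t)
    (h₂ : t < 1) :
    1 + (‖a‖ ^ 2)⁻¹ * saddleRadius a b t
      = ‖b‖ * (1 + t) / (‖b‖ * t + √(t ^ 2 - ‖a‖ ^ 2)) := by
  have ha' : 0 < ‖a‖ := norm_pos_iff.2 ha
  have ht : 0 < t := ha'.trans h₁
  have hb := norm_pos_of_norm_lt_one hab1 (h₁.trans h₂)
  have hsq := Real.sq_sqrt (sub_nonneg.2 (pow_le_pow_left₀ ha'.le h₁.le 2))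
  have := Real.sqrt_nonneg (t ^ 2 - ‖a‖ ^ 2)
  rw [saddleRadius_eq hab1 h₁ h₂]
  set D := √(t ^ 2 - ‖a‖ ^ 2)
  field_simp
  linear_combination hsq - hab1

lemma isSaddleRadius_saddleRadius (ha : a ≠ 0) (hab1 : ‖a‖ ^ 2 + ‖b‖ ^ 2 = 1) (h₁ : ‖a‖ < t)
    (h₂ : t < 1) : IsSaddleRadius (‖a‖ ^ 2)⁻¹ (1 + t) (1 - t) (saddleRadius a b t) := by
  have ha' : 0 < ‖a‖ := norm_pos_iff.2 ha
  have ht : 0 < t := ha'.trans h₁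
  have ht' : 0 < 1 - t ^ 2 := by nlinarith
  have hb := norm_pos_of_norm_lt_one hab1 (h₁.trans h₂)
  have hsq := Real.sq_sqrt (sub_nonneg.2 (pow_le_pow_left₀ ha'.le h₁.le 2))
  have heq := saddleRadius_eq hab1 h₁ h₂
  have hdef : saddleRadius a b t
      = (‖b‖ * t - √(t ^ 2 - ‖a‖ ^ 2)) / (‖b‖ + √(t ^ 2 - ‖a‖ ^ 2)) := rfl
  have hone_add := one_add_saddleRadius (a := a) (t := t) hb
  have hone_add_mul := one_add_mul_saddleRadius ha hab1 h₁ h₂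
  have hD := Real.sqrt_nonneg (t ^ 2 - ‖a‖ ^ 2)
  set D := √(t ^ 2 - ‖a‖ ^ 2)
  have hpos : 0 < saddleRadius a b t := by
    rw [heq]
    positivity
  refine ⟨hpos, ?_, ?_⟩
  · have hfactor : 1 - t ^ 2 = (‖b‖ - D) * (‖b‖ + D) := by linear_combination hsq - hab1
    have : (‖a‖ ^ 2)⁻¹ * saddleRadius a b t ^ 2
        = (‖b‖ - D) * (‖b‖ * t - D) / ((‖b‖ + D) * (‖b‖ * t + D)) := by
      rw [sq (saddleRadius a b t), ← mul_assoc]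
      nth_rw 1 [heq]
      rw [hdef, hfactor]
      field_simp
    rw [this, div_le_one (by positivity)]
    nlinarith [mul_nonneg hb.le hD, mul_nonneg (mul_nonneg hb.le hD) ht.le]
  · rw [hone_add, hone_add_mul, heq]
    field_simp
    linear_combination (1 - t ^ 2) * hab1

lemma phase_saddleRadius (ha : a ≠ 0) (hab1 : ‖a‖ ^ 2 + ‖b‖ ^ 2 = 1) (h₁ : ‖a‖ < t)
    (h₂ : t < 1) :
    phase (‖a‖ ^ 2)⁻¹ (1 + t) (1 - t) (saddleRadius a b t) = -HQ a b t - 2 * Real.log ‖a‖ := by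
  have ha' : 0 < ‖a‖ := norm_pos_iff.2 ha
  have ht : 0 < t := ha'.trans h₁
  have ht' : 0 < 1 - t ^ 2 := by nlinarith
  have hb := norm_pos_of_norm_lt_one hab1 (h₁.trans h₂)
  have hD := Real.sqrt_nonneg (t ^ 2 - ‖a‖ ^ 2)
  rw [phase, one_add_saddleRadius hb, one_add_mul_saddleRadius ha hab1 h₁ h₂,
    saddleRadius_eq hab1 h₁ h₂, HQ, abs_of_pos ht]
  set D := √(t ^ 2 - ‖a‖ ^ 2)
  have hbD : ‖b‖ + D ≠ 0 := by positivity
  have hbtD : ‖b‖ * t + D ≠ 0 := by positivity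
  have hbt : ‖b‖ * (1 + t) ≠ 0 := by positivity
  rw [Real.log_div hbt hbtD, Real.log_div hbt hbD,
    Real.log_div (by positivity) (mul_ne_zero hbD hbtD), Real.log_mul hbD hbtD,
    Real.log_mul (by positivity) ht'.ne', Real.log_pow]
  push_cast
  ring

lemma phase_mul (s x n v c : ℝ) : phase s (c * x) (c * n) v = c * phase s x n v := by
  unfold phase
  ring

lemma IsSaddleRadius.const_mul {s x n v : ℝ} (h : IsSaddleRadius s x n v) (c : ℝ) :
    IsSaddleRadius s (c * x) (c * n) v :=
  ⟨h.pos, h.mul_sq_le_one, by linear_combination c * h.eq⟩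

variable {l r : ℕ}

lemma velocity_lt_one (hl : 0 < l) : ((r : ℝ) - l) / (l + r) < 1 := by
  rw [div_lt_one (by positivity)]
  linarith [(Nat.cast_pos (α := ℝ)).2 hl]

lemma half_mul_one_add_velocity (hl : 0 < l) :
    ((l : ℝ) + r) / 2 * (1 + (r - l) / (l + r)) = r := by
  field_simp
  ring

lemma half_mul_one_sub_velocity (hl : 0 < l) :
    ((l : ℝ) + r) / 2 * (1 - (r - l) / (l + r)) = l := by
  field_simp
  ring

lemma isSaddleRadius_velocity (ha : a ≠ 0) (hab1 : ‖a‖ ^ 2 + ‖b‖ ^ 2 = 1) (hl : 0 < l)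
    (h : ‖a‖ < ((r : ℝ) - l) / (l + r)) :
    IsSaddleRadius (‖a‖ ^ 2)⁻¹ r l (saddleRadius a b (((r : ℝ) - l) / (l + r))) := by
  simpa only [half_mul_one_add_velocity hl, half_mul_one_sub_velocity hl]
    using (isSaddleRadius_saddleRadius ha hab1 h (velocity_lt_one hl)).const_mul (((l : ℝ) + r) / 2)

lemma norm_sq_pow_mul_exp_phase (ha : a ≠ 0) (hab1 : ‖a‖ ^ 2 + ‖b‖ ^ 2 = 1) (hl : 0 < l)
    (h : ‖a‖ < ((r : ℝ) - l) / (l + r)) :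
    (‖a‖ ^ 2) ^ (l + r)
        * Real.exp (2 * phase (‖a‖ ^ 2)⁻¹ r l (saddleRadius a b (((r : ℝ) - l) / (l + r))))
      = Real.exp (-((l + r) * HQ a b (((r : ℝ) - l) / (l + r)))) := by
  set t := ((r : ℝ) - l) / (l + r)
  have hphase := phase_mul (‖a‖ ^ 2)⁻¹ (1 + t) (1 - t) (saddleRadius a b t) (((l : ℝ) + r) / 2)
  rw [half_mul_one_add_velocity hl, half_mul_one_sub_velocity hl,
    phase_saddleRadius ha hab1 h (velocity_lt_one hl)] at hphase
  have hpow : (‖a‖ ^ 2) ^ (l + r) = Real.exp ((l + r) * (2 * Real.log ‖a‖)) := by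
    rw [← Nat.cast_add, Real.exp_nat_mul, two_mul, Real.exp_add,
      Real.exp_log (norm_pos_iff.2 ha), ← sq]
  rw [hphase, hpow, ← Real.exp_add]
  ring_nf

lemma continuousAt_HQ (ha : a ≠ 0) (hab1 : ‖a‖ ^ 2 + ‖b‖ ^ 2 = 1) {ξ : ℝ} (h₁ : ‖a‖ < |ξ|)
    (h₂ : |ξ| < 1) : ContinuousAt (HQ a b) ξ := by
  have ha' : 0 < ‖a‖ := norm_pos_iff.2 ha
  have hξ : 0 < |ξ| := ha'.trans h₁
  have hb := norm_pos_of_norm_lt_one hab1 (h₁.trans h₂)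
  have h₃ : ‖b‖ * |ξ| + √(ξ ^ 2 - ‖a‖ ^ 2) ≠ 0 := by positivity
  have h₄ : ‖b‖ + √(ξ ^ 2 - ‖a‖ ^ 2) ≠ 0 := by positivity
  have h₅ : 1 - ξ ^ 2 ≠ 0 := (sub_pos.2 ((sq_lt_one_iff_abs_lt_one ξ).2 h₂)).ne'
  unfold HQ
  fun_prop (disch := assumption)

lemma HQ_reflect (a b : ℂ) (ξ : ℝ) :
    HQ (starRingEnd ℂ a) (-starRingEnd ℂ b) (-ξ) = HQ a b ξ := by
  simp only [HQ, norm_neg, RCLike.norm_conj, abs_neg, neg_sq]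

end Velocity

section TwoSidedBounds

variable {s v : ℝ} {β : ℂ} {l r : ℕ}

lemma sum_norm_transferMatrix_sq_le_exp (hs : 1 < s) (hβ : 1 + ‖β‖ ^ 2 = s)
    (h : IsSaddleRadius s r l v) (hl : 0 < l) (hr : 0 < r) :
    ∑ i, ∑ j, ‖transferMatrix s β l r i j‖ ^ 2
      ≤ 8 * s ^ 2 / (s - 1) * Real.exp (2 * phase s r l v) := by
  obtain ⟨N, rfl⟩ := Nat.exists_eq_succ_of_ne_zero hl.ne'
  obtain ⟨R, rfl⟩ := Nat.exists_eq_succ_of_ne_zero hr.ne'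
  have : 0 < s := zero_lt_one.trans hs
  have hs₁ : 0 < s - 1 := sub_pos.2 hs
  have hv1 := h.lt_one hs
  have hv : 0 < 1 - v ^ 2 := by nlinarith [h.pos]
  have hgap : (1 - v ^ 2)⁻¹ ≤ s / (s - 1) := by
    rw [inv_le_iff_one_le_mul₀ hv, div_mul_eq_mul_div, one_le_div hs₁]
    linarith [h.mul_sq_le_one]
  have hle {n x : ℕ} (hn : n ≤ N + 1) (hx : x ≤ R + 1) : meixner s n x ^ 2
      ≤ Real.exp (2 * phase s (R + 1 : ℕ) (N + 1 : ℕ) v) / (1 - v ^ 2) := by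
    refine (meixner_sq_le h.pos hs h.mul_sq_le_one n x).trans ?_
    gcongr
    exact phase_mono h.pos hv1.le hs.le (by gcongr) (by gcongr)
  refine (sum_norm_transferMatrix_sq_le hβ (hle le_rfl le_rfl) (hle le_rfl R.le_succ)
    (hle N.le_succ le_rfl)).trans ?_
  calc 8 * s * (Real.exp (2 * phase s (R + 1 : ℕ) (N + 1 : ℕ) v) / (1 - v ^ 2))
      = 8 * s * Real.exp (2 * phase s (R + 1 : ℕ) (N + 1 : ℕ) v) * (1 - v ^ 2)⁻¹ := by ring
    _ ≤ 8 * s * Real.exp (2 * phase s (R + 1 : ℕ) (N + 1 : ℕ) v) * (s / (s - 1)) := by gcongr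
    _ = _ := by ring

lemma exp_phase_le_norm_det (hs : 1 < s) (hβ : 1 + ‖β‖ ^ 2 = s) (h : IsSaddleRadius s r l v)
    (hl : 0 < l) (hr : 0 < r) :
    (s - 1) * Real.exp (2 * phase s r l v)
      ≤ (Real.exp (1 + s) * s * r) ^ 2 * l * ‖(transferMatrix s β l r).det‖ := by
  obtain ⟨N, rfl⟩ := Nat.exists_eq_succ_of_ne_zero hl.ne'
  obtain ⟨R, rfl⟩ := Nat.exists_eq_succ_of_ne_zero hr.ne'
  refine (h.exp_two_mul_phase_le hs).trans ?_
  rw [det_transferMatrix hβ, Complex.norm_real, mul_left_comm s, ← mul_assoc]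
  gcongr
  exact Real.le_norm_self _

lemma exp_phase_mul_nsq_le (hs : 1 < s) (hβ : 1 + ‖β‖ ^ 2 = s) (h : IsSaddleRadius s r l v)
    (hl : 0 < l) (hr : 0 < r) (φ : ℂ × ℂ) :
    (s - 1) ^ 2 * Real.exp (2 * phase s r l v) * nsq φ
      ≤ ((Real.exp (1 + s) * s * r) ^ 2 * l) ^ 2 * (8 * s ^ 2 / (s - 1))
        * nsq (applyMat (transferMatrix s β l r) φ) := by
  have hdet := exp_phase_le_norm_det hs hβ h hl hr
  have hcramer := (norm_det_sq_mul_nsq_le (transferMatrix s β l r) φ).trans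
    (mul_le_mul_of_nonneg_right (sum_norm_transferMatrix_sq_le_exp hs hβ h hl hr) (nsq_nonneg _))
  set X := Real.exp (2 * phase s r l v)
  have hX : 0 < X := Real.exp_pos _
  have := sub_pos.2 hs
  have := nsq_nonneg φ
  refine le_of_mul_le_mul_right ?_ hX
  calc (s - 1) ^ 2 * X * nsq φ * X = ((s - 1) * X) ^ 2 * nsq φ := by ring
    _ ≤ ((Real.exp (1 + s) * s * r) ^ 2 * l * ‖(transferMatrix s β l r).det‖) ^ 2 * nsq φ := by
        gcongr
    _ = ((Real.exp (1 + s) * s * r) ^ 2 * l) ^ 2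
          * (‖(transferMatrix s β l r).det‖ ^ 2 * nsq φ) := by ring
    _ ≤ ((Real.exp (1 + s) * s * r) ^ 2 * l) ^ 2
          * (8 * s ^ 2 / (s - 1) * X * nsq (applyMat (transferMatrix s β l r) φ)) := by gcongr
    _ = _ := by ring

variable {a b : ℂ}

lemma one_lt_inv_sq {α : ℝ} (hα : 0 < α) (hα1 : α < 1) : 1 < (α ^ 2)⁻¹ :=
  (one_lt_inv₀ (by positivity)).2 (pow_lt_one₀ hα.le hα1 two_ne_zero)

lemma pos_of_norm_lt_velocity (h : ‖a‖ < ((r : ℝ) - l) / (l + r)) : 0 < r := by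
  by_contra! hr
  obtain rfl : r = 0 := by lia
  have : ((0 : ℕ) - l : ℝ) / (l + (0 : ℕ)) ≤ 0 :=
    div_nonpos_of_nonpos_of_nonneg (by simp) (by positivity)
  linarith [norm_nonneg a]

lemma qwP_le_exp (ha : a ≠ 0) (hab1 : ‖a‖ ^ 2 + ‖b‖ ^ 2 = 1) {s : ℝ} (hs : s = (‖a‖ ^ 2)⁻¹)
    (φ : ℂ × ℂ) (hl : 0 < l) (h : ‖a‖ < ((r : ℝ) - l) / (l + r)) :
    qwP a b φ (l + r) (r - l) ≤ 8 * s ^ 2 / (s - 1) * nsq φ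
      * Real.exp (-((l + r) * HQ a b (((r : ℝ) - l) / (l + r)))) := by
  subst hs
  have hs := one_lt_inv_sq (norm_pos_iff.2 ha) (h.trans (velocity_lt_one hl))
  have hsum := sum_norm_transferMatrix_sq_le_exp hs (one_add_norm_div_conj_sq ha hab1)
    (isSaddleRadius_velocity ha hab1 hl h) hl (pos_of_norm_lt_velocity h)
  have := nsq_nonneg φ
  rw [qwP_eq ha hab1, ← norm_sq_pow_mul_exp_phase ha hab1 hl h]
  calc _ ≤ (‖a‖ ^ 2) ^ (l + r) * (_ * nsq φ) := by
        gcongr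
        exact (nsq_applyMat_le _ φ).trans (mul_le_mul_of_nonneg_right hsum this)
    _ = _ := by ring

lemma exp_le_qwP (ha : a ≠ 0) (hab1 : ‖a‖ ^ 2 + ‖b‖ ^ 2 = 1) {s : ℝ} (hs : s = (‖a‖ ^ 2)⁻¹)
    (φ : ℂ × ℂ) (hl : 0 < l) (h : ‖a‖ < ((r : ℝ) - l) / (l + r)) :
    (s - 1) ^ 2 * nsq φ * Real.exp (-((l + r) * HQ a b (((r : ℝ) - l) / (l + r))))
      ≤ (Real.exp (1 + s) * s) ^ 4 * (8 * s ^ 2 / (s - 1)) * (l + r) ^ 6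
        * qwP a b φ (l + r) (r - l) := by
  subst hs
  have hs := one_lt_inv_sq (norm_pos_iff.2 ha) (h.trans (velocity_lt_one hl))
  have hle := exp_phase_mul_nsq_le hs (one_add_norm_div_conj_sq ha hab1)
    (isSaddleRadius_velocity ha hab1 hl h) hl (pos_of_norm_lt_velocity h) φ
  set s := (‖a‖ ^ 2)⁻¹
  have := sub_pos.2 hs
  have hpoly : ((r : ℝ) ^ 2 * l) ^ 2 ≤ ((l : ℝ) + r) ^ 6 :=
    calc ((r : ℝ) ^ 2 * l) ^ 2 ≤ (((l : ℝ) + r) ^ 2 * ((l : ℝ) + r)) ^ 2 := by gcongr <;> simp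
      _ = ((l : ℝ) + r) ^ 6 := by ring
  have hqwP : 0 ≤ qwP a b φ (l + r) (r - l) := nsq_nonneg _
  calc _ = (‖a‖ ^ 2) ^ (l + r) * ((s - 1) ^ 2 * _ * nsq φ) := by
        rw [← norm_sq_pow_mul_exp_phase ha hab1 hl h]
        ring
    _ ≤ (‖a‖ ^ 2) ^ (l + r) * _ := mul_le_mul_of_nonneg_left hle (by positivity)
    _ = (Real.exp (1 + s) * s) ^ 4 * (8 * s ^ 2 / (s - 1)) * ((r : ℝ) ^ 2 * l) ^ 2
          * qwP a b φ (l + r) (r - l) := by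
        rw [qwP_eq ha hab1]
        ring
    _ ≤ _ := by gcongr

theorem exists_qwP_bounds {α : ℝ} (hα : 0 < α) (hα1 : α < 1) :
    ∃ c > 0, ∃ C, ∀ {a b : ℂ}, ‖a‖ = α → ‖a‖ ^ 2 + ‖b‖ ^ 2 = 1 →
      ∀ (φ : ℂ × ℂ) {n : ℕ} {y : ℤ}, Even (n + y) → α * n < |(y : ℝ)| → |(y : ℝ)| < n →
      c * nsq φ / n ^ 6 * Real.exp (-(n * HQ a b (y / n))) ≤ qwP a b φ n y ∧
        qwP a b φ n y ≤ C * nsq φ * Real.exp (-(n * HQ a b (y / n))) := by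
  set s := (α ^ 2)⁻¹ with hs
  set K := 8 * s ^ 2 / (s - 1)
  have hs₁ : 0 < s - 1 := sub_pos.2 (one_lt_inv_sq hα hα1)
  have hK : 0 < K := by positivity
  refine ⟨(s - 1) ^ 2 / ((Real.exp (1 + s) * s) ^ 4 * K), by positivity, K, ?_⟩
  intro a b haα hab1 φ n y heven hlow hupp
  wlog hy : 0 ≤ y generalizing a b φ y
  · have hreflect := this (a := starRingEnd ℂ a) (b := -starRingEnd ℂ b) (y := -y)
      (by rwa [RCLike.norm_conj]) (by rwa [norm_neg, RCLike.norm_conj, RCLike.norm_conj]) φ.swap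
      (by rwa [Int.even_add, even_neg, ← Int.even_add]) (by rwa [Int.cast_neg, abs_neg])
      (by rwa [Int.cast_neg, abs_neg]) (by lia)
    rwa [qwP_reflect, nsq_swap, Int.cast_neg, neg_div, HQ_reflect] at hreflect
  subst haα
  have ha : a ≠ 0 := norm_pos_iff.1 hα
  rw [abs_of_nonneg (by exact_mod_cast hy)] at hlow hupp
  have hyn : y < n := by exact_mod_cast hupp
  obtain ⟨r, hr⟩ := heven
  obtain ⟨l, rfl⟩ : ∃ l : ℤ, y = r - l := ⟨n - r, by lia⟩
  lift r to ℕ using (by lia)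
  lift l to ℕ using (by lia)
  obtain rfl : n = l + r := by lia
  have hl : 0 < l := by lia
  push_cast at hlow ⊢
  have h : ‖a‖ < ((r : ℝ) - l) / (l + r) := (lt_div_iff₀ (by positivity)).2 hlow
  refine ⟨?_, qwP_le_exp ha hab1 hs φ hl h⟩
  rw [div_mul_eq_mul_div, div_mul_eq_mul_div, div_mul_eq_mul_div, div_div,
    div_le_iff₀' (by positivity)]
  exact exp_le_qwP ha hab1 hs φ hl h

end TwoSidedBounds

section Limit

lemma tendsto_log_div_of_bounds {L : Filter ℕ} (hL : L ≤ atTop) {p h : ℕ → ℝ} {c C η : ℝ} (k : ℕ)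
    (hc : 0 < c) (hlow : ∀ᶠ n : ℕ in L, c / n ^ k * Real.exp (-(n * h n)) ≤ p n)
    (hupp : ∀ᶠ n : ℕ in L, p n ≤ C * Real.exp (-(n * h n))) (hh : Tendsto h L (𝓝 η)) :
    Tendsto (fun n : ℕ => Real.log (p n) / n) L (𝓝 (-η)) := by
  have hcast : Tendsto (fun n : ℕ => (n : ℝ)) L atTop := tendsto_natCast_atTop_atTop.mono_left hL
  have hlog : Tendsto (fun n : ℕ => Real.log n / n) L (𝓝 0) :=
    Real.isLittleO_log_id_atTop.tendsto_div_nhds_zero.comp hcast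
  have hleft : Tendsto (fun n : ℕ => Real.log c / n - k * (Real.log n / n) - h n) L (𝓝 (-η)) := by
    simpa using ((tendsto_const_nhds.div_atTop hcast).sub (hlog.const_mul (k : ℝ))).sub hh
  have hright : Tendsto (fun n : ℕ => Real.log C / n - h n) L (𝓝 (-η)) := by
    simpa using (tendsto_const_nhds.div_atTop hcast).sub hh
  have hpos : ∀ᶠ n : ℕ in L, (0 : ℝ) < n := hcast.eventually_gt_atTop 0
  refine tendsto_of_tendsto_of_tendsto_of_le_of_le' hleft hright ?_ ?_
  · filter_upwards [hlow, hpos] with n hn hn₀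
    have hlog_le := Real.log_le_log (by positivity) hn
    rw [Real.log_mul (by positivity) (by positivity), Real.log_exp,
      Real.log_div hc.ne' (by positivity), Real.log_pow] at hlog_le
    rw [le_div_iff₀ hn₀]
    field_simp
    linarith
  · filter_upwards [hlow, hupp, hpos] with n hn hn' hn₀
    have hp : 0 < p n := lt_of_lt_of_le (by positivity) hn
    have hC : 0 < C := pos_of_mul_pos_left (hp.trans_le hn') (Real.exp_pos _).le
    have hlog_le := Real.log_le_log hp hn'
    rw [Real.log_mul hC.ne' (by positivity), Real.log_exp] at hlog_le
    rw [div_le_iff₀ hn₀]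
    field_simp
    linarith

lemma tendsto_div_of_sub_mul_isBigO_one {y : ℕ → ℝ} {ξ : ℝ}
    (hy : (fun n : ℕ => y n - n * ξ) =O[atTop] fun _ : ℕ => (1 : ℝ)) :
    Tendsto (fun n : ℕ => y n / n) atTop (𝓝 ξ) := by
  have hcast : Tendsto (fun n : ℕ => ‖(n : ℝ)‖) atTop atTop :=
    tendsto_norm_atTop_atTop.comp tendsto_natCast_atTop_atTop
  have hlittle : (fun n : ℕ => y n - n * ξ) =o[atTop] fun n : ℕ => (n : ℝ) :=
    hy.trans_isLittleO (isLittleO_const_left.2 (Or.inr hcast))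
  have hlim := hlittle.tendsto_div_nhds_zero.add_const ξ
  rw [zero_add] at hlim
  refine hlim.congr' ?_
  filter_upwards [eventually_ne_atTop 0] with n hn
  field_simp
  ring

end Limit

theorem stmt4_general (a b : ℂ) (hab1 : ‖a‖ ^ 2 + ‖b‖ ^ 2 = 1) (ha : a ≠ 0)
    (φ : ℂ × ℂ) (hφ : φ ≠ 0) (ξ : ℝ) (hξ1 : ‖a‖ < |ξ|) (hξ2 : |ξ| < 1)
    (y : ℕ → ℤ) (hy : Tendsto (fun n : ℕ => (y n : ℝ) / n) atTop (𝓝 ξ)) :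
    Tendsto (fun n : ℕ => Real.log (qwP a b φ n (y n)) / (n : ℝ))
      (atTop ⊓ Filter.principal {n : ℕ | Even ((n : ℤ) + y n)})
      (𝓝 (-HQ a b ξ)) := by
  set L := atTop ⊓ Filter.principal {n : ℕ | Even ((n : ℤ) + y n)}
  have hL : L ≤ atTop := inf_le_left
  obtain ⟨c, hc, C, hbounds⟩ := exists_qwP_bounds (norm_pos_iff.2 ha) (hξ1.trans hξ2)
  have hbounds : ∀ᶠ n : ℕ in L,
      c * nsq φ / n ^ 6 * Real.exp (-(n * HQ a b (y n / n))) ≤ qwP a b φ n (y n) ∧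
        qwP a b φ n (y n) ≤ C * nsq φ * Real.exp (-(n * HQ a b (y n / n))) := by
    filter_upwards [hL (hy.abs.eventually_const_lt hξ1), hL (hy.abs.eventually_lt_const hξ2),
      hL (eventually_gt_atTop 0), mem_inf_of_right (mem_principal_self _)] with n hlow hupp hn heven
    rw [abs_div, Nat.abs_cast] at hlow hupp
    have hn : (0 : ℝ) < n := Nat.cast_pos.2 hn
    exact hbounds rfl hab1 φ heven ((lt_div_iff₀ hn).1 hlow) ((div_lt_one hn).1 hupp)
  exact tendsto_log_div_of_bounds hL 6 (mul_pos hc (nsq_pos hφ)) (hbounds.mono fun _ h => h.1)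
    (hbounds.mono fun _ h => h.2) ((continuousAt_HQ ha hab1 hξ1 hξ2).tendsto.comp (hy.mono_left hL))

/-- Corollary `largeD`: large deviation limit
`lim (1/n) log p_n(φ; y_n) = −H_Q(ξ)` along positive integers `n` with `n + y_n` even. -/
theorem stmt4 (a b : ℂ) (hab1 : ‖a‖ ^ 2 + ‖b‖ ^ 2 = 1) (hab : a * b ≠ 0)
    (φ : ℂ × ℂ) (hφ : nsq φ = 1) (ξ : ℝ) (hξ1 : ‖a‖ < |ξ|) (hξ2 : |ξ| < 1)
    (y : ℕ → ℤ) (hy : (fun n : ℕ => (y n : ℝ) - (n : ℝ) * ξ) =O[atTop] fun _ : ℕ => (1 : ℝ)) :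
    Tendsto (fun n : ℕ => Real.log (qwP a b φ n (y n)) / (n : ℝ))
      (atTop ⊓ Filter.principal {n : ℕ | Even ((n : ℤ) + y n)})
      (𝓝 (-HQ a b ξ)) :=
  stmt4_general a b hab1 (left_ne_zero_of_mul hab) φ (by rintro rfl; simp [nsq] at hφ) ξ hξ1 hξ2 y
    (tendsto_div_of_sub_mul_isBigO_one hy)
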